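/- Let A be a finite Boolean algebra, ≤' a linear order on the set of atoms of A, and ⊑ the natural order on A induced by ≤'. Let B be a Boolean subalgebra of A. The restriction of ⊑ to the set of atoms of B (elements a ∈ B, a ≠ ⊥, such that every b ∈ B with b ≤ a equals ⊥ or a) is a linear order on the atoms of B; let ⊑_B denote the natural order on the Boolean algebra B induced by this linear order on the atoms of B. Then ⊑_B coincides with the restriction of ⊑ to B: for all x, y ∈ B, x ⊑_B y if and only if x ⊑ y. -/

import Mathlib

/-- A Boolean subalgebra of a Boolean algebra, i.e. a subset containing `⊥` and `⊤` and
closed under `⊓`, `⊔`, and complement. -/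
def IsBoolSubalg {A : Type*} [BooleanAlgebra A] (B : Set A) : Prop :=
  ⊥ ∈ B ∧ ⊤ ∈ B ∧ (∀ x ∈ B, ∀ y ∈ B, x ⊓ y ∈ B) ∧ (∀ x ∈ B, ∀ y ∈ B, x ⊔ y ∈ B) ∧
    ∀ x ∈ B, xᶜ ∈ B

/-- `a` is an atom of the Boolean subalgebra `B`: it belongs to `B`, is nonzero, and every
element of `B` below it is `⊥` or `a` itself. -/
def IsAtomOfSet {A : Type*} [BooleanAlgebra A] (B : Set A) (a : A) : Prop :=
  a ∈ B ∧ a ≠ ⊥ ∧ ∀ b ∈ B, b ≤ a → b = ⊥ ∨ b = a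

/-- The natural order on a (finite) Boolean algebra `A` induced by a linear order `r` on the set
of atoms of `A`: `x ⊑ y` iff `At(x) ≤ At(y)` in the colexicographic order, i.e. `x = y` or the
`r`-greatest atom lying below exactly one of `x` and `y` lies below `y`. -/
def natOrder {A : Type*} [BooleanAlgebra A]
    (r : {a : A // IsAtom a} → {a : A // IsAtom a} → Prop) (x y : A) : Prop :=
  x = y ∨ ∃ a : {a : A // IsAtom a}, a.val ≤ y ∧ ¬ a.val ≤ x ∧
    ∀ b : {a : A // IsAtom a}, ¬ (b.val ≤ x ↔ b.val ≤ y) → r b a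

/-- The natural order on a (finite) Boolean subalgebra `B` of `A` induced by a linear order `r'`
on the set of atoms of `B`: `x ⊑_B y` iff `x = y` or the `r'`-greatest atom of `B` lying below
exactly one of `x` and `y` lies below `y`. -/
def natOrderOn {A : Type*} [BooleanAlgebra A] (B : Set A) (r' : A → A → Prop) (x y : A) : Prop :=
  x = y ∨ ∃ a, IsAtomOfSet B a ∧ a ≤ y ∧ ¬ a ≤ x ∧
    ∀ b, IsAtomOfSet B b → ¬ (b ≤ x ↔ b ≤ y) → r' b a

/-!
Two remarks reduce everything to `r`-greatest atoms. An atom of `A` below an atom `p` of `B` lies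
below exactly those elements of `B` which are above `p`. And distinct atoms of `B` are disjoint,
so `⊑` compares them as `r` compares the greatest atoms of `A` below them. Hence for `x, y ∈ B`
the greatest atom of `A` in the symmetric difference of `x` and `y` lies below the `⊑`-greatest
atom of `B` in it.
-/

/-- `m` is the `r`-greatest atom below `x`, by which `natOrder r` compares disjoint elements. It is
taken in the subtype of atoms since `r` is only defined there. -/
def IsLeadingAtom {A : Type*} [BooleanAlgebra A]
    (r : {a : A // IsAtom a} → {a : A // IsAtom a} → Prop) (x : A) (m : {a : A // IsAtom a}) :
    Prop :=
  m.val ≤ x ∧ ∀ c : {a : A // IsAtom a}, c.val ≤ x → r c m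

section

variable {A : Type*} [BooleanAlgebra A] {r : {a : A // IsAtom a} → {a : A // IsAtom a} → Prop}
  {B : Set A} {p q x y c : A} {m n : {a : A // IsAtom a}}

theorem exists_isLeadingAtom [IsAtomic A] [Finite {a : A // IsAtom a}] [IsTrans _ r]
    [Std.Total r] (hx : x ≠ ⊥) : ∃ m, IsLeadingAtom r x m := by
  obtain ⟨a, ha, hax⟩ := (eq_bot_or_exists_atom_le x).resolve_left hx
  have : Nonempty {c : {a : A // IsAtom a} // c.val ≤ x} := ⟨⟨a, ha⟩, hax⟩
  obtain ⟨⟨m, hmx⟩, hm⟩ :=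
    (Std.Total.directed (r := r)
      (Subtype.val : {c : {a : A // IsAtom a} // c.val ≤ x} → {a : A // IsAtom a})).finite_le id
  exact ⟨m, hmx, fun c hcx => hm ⟨c, hcx⟩⟩

theorem natOrder_iff_of_disjoint [IsTrans _ r] (hpq : Disjoint p q) (hm : IsLeadingAtom r p m)
    (hn : IsLeadingAtom r q n) : natOrder r p q ↔ r m n := by
  have not_le_both (c : {a : A // IsAtom a}) (hcp : c.val ≤ p) (hcq : c.val ≤ q) : False :=
    c.2.1 (le_bot_iff.1 (hpq hcp hcq))
  constructor
  · rintro (rfl | ⟨a, haq, -, hmax⟩)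
    · exact hn.2 m hm.1
    · have hma : r m a := hmax m fun h => not_le_both m hm.1 (h.1 hm.1)
      exact trans_of r hma (hn.2 a haq)
  · intro hmn
    refine .inr ⟨n, hn.1, fun hnp => not_le_both n hnp hn.1, fun c hc => ?_⟩
    by_cases hcq : c.val ≤ q
    · exact hn.2 c hcq
    · have hcp : c.val ≤ p := by tauto
      exact trans_of r (hm.2 c hcp) hmn

namespace IsAtomOfSet

theorem le_or_disjoint (hB : IsBoolSubalg B) (hp : IsAtomOfSet B p) (hx : x ∈ B) :
    p ≤ x ∨ Disjoint p x := by
  obtain ⟨-, -, inf_mem, -, -⟩ := hB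
  rw [disjoint_iff, ← inf_eq_left]
  exact (hp.2.2 (p ⊓ x) (inf_mem p hp.1 x hx) inf_le_left).symm

theorem le_iff_le_of_le (hB : IsBoolSubalg B) (hp : IsAtomOfSet B p) (hc : c ≠ ⊥) (hcp : c ≤ p)
    (hx : x ∈ B) : c ≤ x ↔ p ≤ x :=
  ⟨fun hcx => (hp.le_or_disjoint hB hx).resolve_right fun h => hc (le_bot_iff.1 (h hcp hcx)),
    hcp.trans⟩

theorem eq_of_le_of_le (hB : IsBoolSubalg B) (hp : IsAtomOfSet B p) (hq : IsAtomOfSet B q)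
    (hc : c ≠ ⊥) (hcp : c ≤ p) (hcq : c ≤ q) : p = q :=
  le_antisymm ((hp.le_iff_le_of_le hB hc hcp hq.1).1 hcq)
    ((hq.le_iff_le_of_le hB hc hcq hp.1).1 hcp)

theorem natOrder_iff [IsTrans _ r] (hB : IsBoolSubalg B) (hp : IsAtomOfSet B p)
    (hq : IsAtomOfSet B q) (hm : IsLeadingAtom r p m) (hn : IsLeadingAtom r q n) :
    natOrder r p q ↔ r m n := by
  rcases hp.le_or_disjoint hB hq.1 with hpq | hpq
  · obtain rfl := hp.eq_of_le_of_le hB hq hp.2.1 le_rfl hpq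
    exact iff_of_true (.inl rfl) (hn.2 m hm.1)
  · exact natOrder_iff_of_disjoint hpq hm hn

end IsAtomOfSet

namespace IsBoolSubalg

theorem exists_isAtomOfSet_ge (hB : IsBoolSubalg B) (hfin : B.Finite) (hc : IsAtom c) :
    ∃ p, IsAtomOfSet B p ∧ c ≤ p := by
  obtain ⟨-, top_mem, inf_mem, -, compl_mem⟩ := hB
  obtain ⟨p, ⟨hpB, hcp⟩, hmin⟩ :=
    (hfin.subset (Set.sep_subset B (c ≤ ·))).exists_minimal ⟨⊤, top_mem, le_top⟩
  refine ⟨p, ⟨hpB, ne_bot_of_le_ne_bot hc.1 hcp, fun b hb hbp => ?_⟩, hcp⟩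
  by_cases hcb : c ≤ b
  · exact .inr (hbp.antisymm (hmin ⟨hb, hcb⟩ hbp))
  · have hcb' : c ≤ bᶜ := (hc.not_le_iff_disjoint.1 hcb).le_compl_right
    have hpb : p ≤ p ⊓ bᶜ :=
      hmin ⟨inf_mem p hpB bᶜ (compl_mem b hb), le_inf hcp hcb'⟩ inf_le_left
    exact .inl (le_compl_self.1 (hbp.trans (hpb.trans inf_le_right)))

theorem isLinearOrder_natOrder_atoms (hB : IsBoolSubalg B) [IsLinearOrder _ r]
    (hlead : ∀ p, IsAtomOfSet B p → ∃ m, IsLeadingAtom r p m) :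
    IsLinearOrder {a : A // IsAtomOfSet B a} (fun a b => natOrder r a.val b.val) := by
  choose lead hlead using fun p : {a : A // IsAtomOfSet B a} => hlead p.1 p.2
  have lead_injective : Function.Injective lead := fun p q hpq =>
    Subtype.ext (p.2.eq_of_le_of_le hB q.2 (lead p).2.1 (hlead p).1 (hpq ▸ (hlead q).1))
  let leadEmbedding : (fun a b : {a : A // IsAtomOfSet B a} => natOrder r a.val b.val) ↪r r :=
    ⟨⟨lead, lead_injective⟩, fun {p q} => (p.2.natOrder_iff hB q.2 (hlead p) (hlead q)).symm⟩
  exact leadEmbedding.isLinearOrder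

theorem natOrder_of_natOrderOn (hB : IsBoolSubalg B) [IsTrans _ r]
    (hcover : ∀ c, IsAtom c → ∃ p, IsAtomOfSet B p ∧ c ≤ p)
    (hlead : ∀ p, IsAtomOfSet B p → ∃ m, IsLeadingAtom r p m) (hx : x ∈ B) (hy : y ∈ B)
    (h : natOrderOn B (natOrder r) x y) : natOrder r x y := by
  obtain rfl | ⟨p, hp, hpy, hpx, hmax⟩ := h
  · exact .inl rfl
  obtain ⟨m, hm⟩ := hlead p hp
  have hmx : ¬ m.val ≤ x := by rwa [hp.le_iff_le_of_le hB m.2.1 hm.1 hx]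
  refine .inr ⟨m, hm.1.trans hpy, hmx, fun c hc => ?_⟩
  obtain ⟨q, hq, hcq⟩ := hcover c c.2
  obtain ⟨n, hn⟩ := hlead q hq
  rw [hq.le_iff_le_of_le hB c.2.1 hcq hx, hq.le_iff_le_of_le hB c.2.1 hcq hy] at hc
  have hnm : r n m := (hq.natOrder_iff hB hp hn hm).1 (hmax q hq hc)
  exact trans_of r (hn.2 c hcq) hnm

theorem natOrderOn_of_natOrder (hB : IsBoolSubalg B)
    (hcover : ∀ c, IsAtom c → ∃ p, IsAtomOfSet B p ∧ c ≤ p) (hx : x ∈ B) (hy : y ∈ B)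
    (h : natOrder r x y) : natOrderOn B (natOrder r) x y := by
  obtain rfl | ⟨a, hay, hax, hmax⟩ := h
  · exact .inl rfl
  obtain ⟨p, hp, hap⟩ := hcover a a.2
  rw [hp.le_iff_le_of_le hB a.2.1 hap hx] at hax
  rw [hp.le_iff_le_of_le hB a.2.1 hap hy] at hay
  refine .inr ⟨p, hp, hay, hax, fun q hq hqxy => ?_⟩
  by_cases hqp : q = p
  · exact .inl hqp
  have haq : ¬ a.val ≤ q := fun haq => hqp (hq.eq_of_le_of_le hB hp a.2.1 haq hap)
  refine .inr ⟨a, hap, haq, fun c hc => hmax c ?_⟩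
  have hcqp : c.val ≤ q ∨ c.val ≤ p := by tauto
  rcases hcqp with hcq | hcp
  · rwa [hq.le_iff_le_of_le hB c.2.1 hcq hx, hq.le_iff_le_of_le hB c.2.1 hcq hy]
  · exact fun hcxy => hax ((hp.le_iff_le_of_le hB c.2.1 hcp hx).1 (hcxy.2 (hcp.trans hay)))

end IsBoolSubalg

end

theorem natOrder_restricts_to_subalgebra_general {A : Type*} [BooleanAlgebra A]
    (r : {a : A // IsAtom a} → {a : A // IsAtom a} → Prop) [IsLinearOrder {a : A // IsAtom a} r]
    (B : Set A) (hB : IsBoolSubalg B)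
    (hcover : ∀ c, IsAtom c → ∃ p, IsAtomOfSet B p ∧ c ≤ p)
    (hlead : ∀ p, IsAtomOfSet B p → ∃ m, IsLeadingAtom r p m) :
    IsLinearOrder {a : A // IsAtomOfSet B a} (fun a b => natOrder r a.val b.val) ∧
    ∀ x ∈ B, ∀ y ∈ B, natOrderOn B (natOrder r) x y ↔ natOrder r x y :=
  ⟨hB.isLinearOrder_natOrder_atoms hlead, fun _ hx _ hy =>
    ⟨hB.natOrder_of_natOrderOn hcover hlead hx hy, hB.natOrderOn_of_natOrder hcover hx hy⟩⟩

/-- Let `A` be a finite Boolean algebra with a linear order `r` on its atoms, inducing the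
natural order `natOrder r` on `A`, and let `B` be a Boolean subalgebra of `A`. Then the
restriction of `natOrder r` to the atoms of `B` is a linear order on the atoms of `B`, and the
natural order on `B` induced by it coincides with the restriction of `natOrder r` to `B`. -/
theorem natOrder_restricts_to_subalgebra {A : Type*} [BooleanAlgebra A] [Fintype A]
    (r : {a : A // IsAtom a} → {a : A // IsAtom a} → Prop)
    (hr : IsLinearOrder {a : A // IsAtom a} r)
    (B : Set A) (hB : IsBoolSubalg B) :
    IsLinearOrder {a : A // IsAtomOfSet B a} (fun a b => natOrder r a.val b.val) ∧
    ∀ x ∈ B, ∀ y ∈ B, natOrderOn B (natOrder r) x y ↔ natOrder r x y := by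
  exact natOrder_restricts_to_subalgebra_general r B hB
    (fun _ hc => hB.exists_isAtomOfSet_ge B.toFinite hc) (fun _ hp => exists_isLeadingAtom hp.2.1)
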